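/- arXiv:0812.3355 — 2 statements merged into one kernel-verified Lean document; each statement's English description precedes it below -/
import Mathlib

section
/- Let F be a field, let Y be an integral scheme of finite type over F, let E/F be a field extension, let X = Y ×_{Spec F} Spec E, and let π: X → Y be the projection morphism. Then for every irreducible closed subset Z ⊆ Y, every irreducible component of π^{-1}(Z) has the same dimension as Z (dimension meaning the topological Krull dimension of the subspace). -/
open AlgebraicGeometry CategoryTheory CategoryTheory.Limits TopologicalSpace

universe u

namespace ThcrDM

variable {X : Scheme.{u}}

/-- The `n`-th iterate (`n : ℤ`) of an automorphism of a scheme, on points. -/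
noncomputable def iter (σ : X ≅ X) : ℤ → X → X
  | Int.ofNat n => (fun x => σ.hom.base x)^[n]
  | Int.negSucc n => (fun x => σ.inv.base x)^[n + 1]

/-- The σ-orbit `{σ^n(x) : n ∈ ℤ}` of a point `x`. -/
noncomputable def orbit (σ : X ≅ X) (x : X) : Set X :=
  Set.range fun n : ℤ => iter σ n x

/-- A subset `Z` is σ-invariant if `σ(Z) = Z`. -/
def SigmaInv (σ : X ≅ X) (Z : Set X) : Prop :=
  σ.hom.base '' Z = Z

/-- A σ-invariant closed subset is σ-irreducible if it admits no decomposition into two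
σ-invariant closed subsets both properly contained in it. -/
def SigmaIrred (σ : X ≅ X) (Z : Set X) : Prop :=
  IsClosed Z ∧ SigmaInv σ Z ∧
    ∀ Z₁ Z₂ : Set X, IsClosed Z₁ → IsClosed Z₂ → SigmaInv σ Z₁ → SigmaInv σ Z₂ →
      Z = Z₁ ∪ Z₂ → ¬(Z₁ ⊂ Z ∧ Z₂ ⊂ Z)

/-- `W` is a maximal σ-irreducible closed subset of `Z`, i.e. a maximal element, under
inclusion, of the set of proper σ-irreducible closed subsets of `Z`. -/
def MaxSigmaIrredIn (σ : X ≅ X) (Z W : Set X) : Prop :=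
  SigmaIrred σ W ∧ W ⊂ Z ∧ ∀ W' : Set X, SigmaIrred σ W' → W' ⊂ Z → W ⊆ W' → W' = W

/-- `(X, σ)` has good dense orbits if the set of points with dense σ-orbit is open. -/
def GoodDenseOrbits (σ : X ≅ X) : Prop :=
  IsOpen { x : X | Dense (orbit σ x) }

/-- `(X, σ)` is ordinary if for every σ-irreducible closed subset `Z`, the set of points of `Z`
whose σ-orbit is dense in `Z` is open in `Z` (in the subspace topology). -/
def Ordinary (σ : X ≅ X) : Prop :=
  ∀ Z : Set X, SigmaIrred σ Z →
    ∃ U : Set X, IsOpen U ∧ { z | z ∈ Z ∧ Z ⊆ closure (orbit σ z) } = U ∩ Z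

/-- `(X, σ)` is countable-avoiding if every σ-irreducible closed subset has either finitely
many or uncountably many maximal σ-irreducible closed subsets. -/
def CountableAvoiding (σ : X ≅ X) : Prop :=
  ∀ Z : Set X, SigmaIrred σ Z →
    { W : Set X | MaxSigmaIrredIn σ Z W }.Finite ∨
      ¬ { W : Set X | MaxSigmaIrredIn σ Z W }.Countable

/-- A subset `Z` has codimension one if every irreducible component of `Z` (i.e. every maximal
irreducible subset of `Z`) has coheight 1 in the poset of irreducible closed subsets of `X`. -/
def CodimOne (Z : Set X) : Prop :=
  ∀ T : IrreducibleCloseds X,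
    Maximal (fun s : Set X => s ⊆ Z ∧ IsIrreducible s) ↑T → Order.coheight T = 1

/-- Powers of an automorphism. -/
noncomputable def isoPow (σ : X ≅ X) : ℕ → (X ≅ X)
  | 0 => Iso.refl X
  | n + 1 => isoPow σ n ≪≫ σ

/-- The automorphism of the function field induced by an automorphism of an irreducible
scheme. -/
noncomputable def functionFieldAut [IrreducibleSpace X] (σ : X ≅ X) :
    X.functionField ⟶ X.functionField :=
  eqToHom (congrArg X.presheaf.stalk (genericPoint_eq_of_isOpenImmersion σ.hom).symm) ≫
    σ.hom.stalkMap (genericPoint X)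

/-- The canonical map from the base ring into the function field of an irreducible
scheme over it. -/
noncomputable def constMap [IrreducibleSpace X] {k : CommRingCat.{u}} (p : X ⟶ Spec k) :
    k ⟶ X.functionField :=
  haveI : Nonempty (⊤ : X.Opens) := ⟨⟨Classical.arbitrary X, trivial⟩⟩
  (Scheme.ΓSpecIso k).inv ≫ p.appTop ≫ X.germToFunctionField ⊤

/-! Over a nonempty affine open of an integral `Y` with coordinate ring `R`, Noether normalization
gives a finite injection `F[x₁, …, xₛ] → R`. After base change, `E ⊗ R` is integral over
`E[x₁, …, xₛ]` and still torsion-free over it, as `R` embeds in a vector space over `F(x₁, …, xₛ)`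
and `F[x₁, …, xₛ] → E[x₁, …, xₛ]` is flat. Hence no minimal prime of `E ⊗ R` contracts to a nonzero
ideal of `E[x₁, …, xₛ]`, and every irreducible component of `Spec (E ⊗ R)` has dimension
`s = dim R`. Since `s` is the transcendence degree of the function field of `Y`, it does not depend
on the affine open, and dimension can be computed on an open cover. A general `Z` is handled by
replacing `Y` with `Z` endowed with its reduced structure. -/

section Algebra

open TensorProduct

theorem ringKrullDim_eq_of_isIntegral (A B : Type*) [CommRing A] [CommRing B] [Algebra A B]
    [Algebra.IsIntegral A B] [FaithfulSMul A B] : ringKrullDim A = ringKrullDim B := by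
  apply le_antisymm
  · refine iSup_le fun l ↦ ?_
    obtain ⟨P, _, _⟩ := Ideal.nonempty_primesOver (S := B) l.head.asIdeal
    obtain ⟨L, hL, -⟩ := Ideal.exists_ltSeries_of_hasGoingUp l P
    exact hL ▸ Order.LTSeries.length_le_krullDim L
  · exact Order.krullDim_le_of_strictMono (PrimeSpectrum.comap (algebraMap A B))
      fun _ _ h ↦ Ideal.IsIntegral.comap_lt_comap h

theorem ringKrullDim_quotient_of_mem_minimalPrimes (A : Type*) {B : Type*} [CommRing A]
    [IsDomain A] [CommRing B] [Algebra A B] [Algebra.IsIntegral A B] [Module.IsTorsionFree A B]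
    {Q : Ideal B} (hQ : Q ∈ minimalPrimes B) : ringKrullDim (B ⧸ Q) = ringKrullDim A := by
  have : FaithfulSMul A (B ⧸ Q) := by
    rw [faithfulSMul_iff_algebraMap_injective, injective_iff_map_eq_zero]
    intro a ha
    by_contra ha0
    have haQ : algebraMap A B a ∈ Q := Ideal.Quotient.eq_zero_iff_mem.1 ha
    refine notMem_nonZeroDivisors_of_mem_mem_minimalPrimes haQ hQ ?_
    rw [mem_nonZeroDivisors_iff_right]
    intro y hy
    rw [mul_comm, ← Algebra.smul_def] at hy
    exact (smul_eq_zero.1 hy).resolve_left ha0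
  exact (ringKrullDim_eq_of_isIntegral A (B ⧸ Q)).symm

theorem isTorsionFree_tensorProduct (P A M : Type*) [CommRing P] [IsDomain P] [CommRing A]
    [Algebra P A] [Module.Flat P A] [AddCommGroup M] [Module P M] [Module.IsTorsionFree P M] :
    Module.IsTorsionFree A (A ⊗[P] M) := by
  let K := FractionRing P
  have : Module.Flat P (K ⊗[P] M) := .trans P K _
  let ι : M →ₗ[P] K ⊗[P] M := TensorProduct.mk P K M 1
  have hι : Function.Injective ι :=
    (IsLocalizedModule.injective_iff_isRegular (nonZeroDivisors P) ι).2 fun c ↦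
      Module.IsTorsionFree.isSMulRegular <| isRegular_iff_mem_nonZeroDivisors.2 c.2
  have hιA : Function.Injective (ι.baseChange A) :=
    Module.Flat.lTensor_preserves_injective_linearMap ι hι
  exact hιA.moduleIsTorsionFree _ (map_smul _)

theorem exists_algebra_mvPolynomial_isIntegral (F R : Type*) [Field F] [CommRing R] [Nontrivial R]
    [Algebra F R] [Algebra.FiniteType F R] :
    ∃ (s : ℕ) (_ : Algebra (MvPolynomial (Fin s) F) R),
      IsScalarTower F (MvPolynomial (Fin s) F) R ∧ FaithfulSMul (MvPolynomial (Fin s) F) R ∧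
        Algebra.IsIntegral (MvPolynomial (Fin s) F) R := by
  obtain ⟨s, g, hg, hi⟩ := exists_integral_inj_algHom_of_fg F R
  let := g.toRingHom.toAlgebra
  exact ⟨s, inferInstance, .of_algebraMap_eq' g.comp_algebraMap.symm,
    (faithfulSMul_iff_algebraMap_injective _ _).2 hg, ⟨hi⟩⟩

theorem ringKrullDim_mvPolynomial_fin (F : Type*) [Field F] (s : ℕ) :
    ringKrullDim (MvPolynomial (Fin s) F) = s := by
  simp [MvPolynomial.ringKrullDim_of_isNoetherianRing]

theorem ringKrullDim_eq_toENat_trdeg (F R : Type*) [Field F] [CommRing R] [IsDomain R]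
    [Algebra F R] [Algebra.FiniteType F R] :
    ringKrullDim R = (Algebra.trdeg F R).toENat := by
  obtain ⟨s, _, _, _, _⟩ := exists_algebra_mvPolynomial_isIntegral F R
  have htrdeg := lift_trdeg_add_eq F (MvPolynomial (Fin s) F) R
  rw [trdeg_eq_zero (R := MvPolynomial (Fin s) F) (A := R),
    MvPolynomial.trdeg_of_isDomain] at htrdeg
  rw [← ringKrullDim_eq_of_isIntegral (MvPolynomial (Fin s) F) R, ringKrullDim_mvPolynomial_fin,
    ← Cardinal.toENat_lift, ← htrdeg]
  simp

attribute [local instance] MvPolynomial.algebraMvPolynomial in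
theorem ringKrullDim_quotient_tensorProduct {F E R : Type*} [Field F] [Field E] [CommRing R]
    [IsDomain R] [Algebra F E] [Algebra F R] [Algebra.FiniteType F R] {Q : Ideal (E ⊗[F] R)}
    (hQ : Q ∈ minimalPrimes (E ⊗[F] R)) : ringKrullDim ((E ⊗[F] R) ⧸ Q) = ringKrullDim R := by
  obtain ⟨s, _, _, _, _⟩ := exists_algebra_mvPolynomial_isIntegral F R
  let P := MvPolynomial (Fin s) F
  let A := MvPolynomial (Fin s) E
  let e : A ⊗[P] R ≃ₐ[E] E ⊗[F] R := Algebra.IsPushout.cancelBaseChangeAlg F E P A R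
  let Q' := Q.comap (e : A ⊗[P] R →+* E ⊗[F] R)
  have : Module.Flat P A := .isBaseChange F P E A Algebra.IsPushout.out
  have : Module.IsTorsionFree A (A ⊗[P] R) := isTorsionFree_tensorProduct P A R
  have hQ' : Q' ∈ minimalPrimes (A ⊗[P] R) := by
    have h := Ideal.minimalPrimes_comap_of_surjective (f := (e : A ⊗[P] R →+* E ⊗[F] R))
      e.surjective hQ
    rwa [← RingHom.ker_eq_comap_bot, (RingHom.injective_iff_ker_eq_bot _).1
      (show Function.Injective (e : A ⊗[P] R →+* E ⊗[F] R) from e.injective)] at h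
  calc ringKrullDim ((E ⊗[F] R) ⧸ Q) = ringKrullDim ((A ⊗[P] R) ⧸ Q') :=
        (ringKrullDim_eq_of_ringEquiv <| Ideal.quotientEquiv Q' Q e.toRingEquiv
          (Ideal.map_comap_of_surjective _ e.surjective Q).symm).symm
    _ = ringKrullDim A := ringKrullDim_quotient_of_mem_minimalPrimes A hQ'
    _ = ringKrullDim P := by simp only [A, P, ringKrullDim_mvPolynomial_fin]
    _ = ringKrullDim R := ringKrullDim_eq_of_isIntegral P R

end Algebra

section Topology

open Topology

theorem topologicalKrullDim_eq_iSup_of_isOpenEmbedding {ι X : Type*} [TopologicalSpace X]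
    {U : ι → Type*} [∀ i, TopologicalSpace (U i)] {f : ∀ i, U i → X}
    (hf : ∀ i, IsOpenEmbedding (f i)) (hcover : ⋃ i, Set.range (f i) = Set.univ) :
    topologicalKrullDim X = ⨆ i, topologicalKrullDim (U i) := by
  refine le_antisymm ?_ (iSup_le fun i ↦ (hf i).isInducing.topologicalKrullDim_le)
  rw [topologicalKrullDim, Order.krullDim_eq_iSup_coheight]
  refine iSup_le fun V ↦ ?_
  obtain ⟨x, hx⟩ := V.isIrreducible.nonempty
  obtain ⟨i, y, rfl⟩ := Set.iUnion_eq_univ_iff.1 hcover x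
  obtain ⟨W, hW⟩ := (IrreducibleCloseds.orderIsoOfIsOpenEmbedding (f i) (hf i)).surjective
    ⟨V, y, hx⟩
  obtain rfl : IrreducibleCloseds.map (f i) (hf i).continuous W = V := congrArg Subtype.val hW
  rw [(hf i).coheight_map]
  exact (Order.coheight_le_krullDim W).trans (le_iSup (fun i ↦ topologicalKrullDim (U i)) i)

theorem isHomeomorph_restrictPreimage {X Y : Type*} [TopologicalSpace X] [TopologicalSpace Y]
    {f : X → Y} (hf : IsEmbedding f) {T : Set Y} (hT : T ⊆ Set.range f) :
    IsHomeomorph (T.restrictPreimage f) := by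
  refine isHomeomorph_iff_isEmbedding_surjective.2 ⟨hf.restrictPreimage T, fun ⟨y, hy⟩ ↦ ?_⟩
  obtain ⟨x, rfl⟩ := hT hy
  exact ⟨⟨x, hy⟩, rfl⟩

theorem preimage_mem_irreducibleComponents_of_isEmbedding {X Y : Type*} [TopologicalSpace X]
    [TopologicalSpace Y] {f : X → Y} (hf : IsEmbedding f) {T : Set Y}
    (hT : Maximal (fun t ↦ t ⊆ Set.range f ∧ IsIrreducible t) T) :
    f ⁻¹' T ∈ irreducibleComponents X := by
  refine ⟨?_, fun t ht hle ↦ Set.image_subset_iff.1 (hT.2 ?_ ?_)⟩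
  · have e := (isHomeomorph_restrictPreimage hf hT.1.1).homeomorph
    exact isIrreducible_iff_irreducibleSpace.2 <|
      e.irreducibleSpace_iff.2 <| isIrreducible_iff_irreducibleSpace.1 hT.1.2
  · exact ⟨Set.image_subset_range f t, ht.image f hf.continuous.continuousOn⟩
  · exact (Set.image_preimage_eq_of_subset hT.1.1).symm.trans_subset (Set.image_mono hle)

open PrimeSpectrum in
theorem topologicalKrullDim_zeroLocus {A : Type*} [CommRing A] (I : Ideal A) :
    topologicalKrullDim (zeroLocus (I : Set A)) = ringKrullDim (A ⧸ I) := by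
  rw [← topologicalKrullDim_eq_ringKrullDim]
  have hmk := isClosedEmbedding_comap_of_surjective (A ⧸ I) (Ideal.Quotient.mk I)
    Ideal.Quotient.mk_surjective
  have hrange : Set.range (comap (Ideal.Quotient.mk I)) = zeroLocus (I : Set A) := by
    rw [range_comap_of_surjective _ _ Ideal.Quotient.mk_surjective, Ideal.mk_ker]
  rw [← hrange]
  exact (hmk.isEmbedding.toHomeomorph.isHomeomorph.topologicalKrullDim_eq).symm
end Topology

section Scheme

open TensorProduct

theorem topologicalKrullDim_of_mem_irreducibleComponents_tensorProduct {F E R : Type*} [Field F]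
    [Field E] [CommRing R] [IsDomain R] [Algebra F E] [Algebra F R] [Algebra.FiniteType F R]
    {T : Set (PrimeSpectrum (E ⊗[F] R))}
    (hT : T ∈ irreducibleComponents (PrimeSpectrum (E ⊗[F] R))) :
    topologicalKrullDim T = ringKrullDim R := by
  have hclosed : IsClosed T := isClosed_of_mem_irreducibleComponents T hT
  have hmin : PrimeSpectrum.vanishingIdeal T ∈ minimalPrimes (E ⊗[F] R) :=
    PrimeSpectrum.vanishingIdeal_mem_minimalPrimes.2 (hclosed.closure_eq.symm ▸ hT)
  rw [← ringKrullDim_quotient_tensorProduct hmin, ← topologicalKrullDim_zeroLocus,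
    PrimeSpectrum.zeroLocus_vanishingIdeal_eq_closure, hclosed.closure_eq]

theorem SpecMap_constMap [IrreducibleSpace X] {k : CommRingCat.{u}} (p : X ⟶ Spec k) :
    Spec.map (constMap p) = X.fromSpecStalk (genericPoint X) ≫ p := by
  have : Nonempty (⊤ : X.Opens) := ⟨⟨Classical.arbitrary X, trivial⟩⟩
  calc Spec.map (constMap p)
    _ = Spec.map (X.presheaf.germ ⊤ (genericPoint X) trivial) ≫ Spec.map p.appTop ≫
          Spec.map (Scheme.ΓSpecIso k).inv := by
      simp only [constMap, Scheme.germToFunctionField, Spec.map_comp, Category.assoc]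
    _ = X.fromSpecStalk (genericPoint X) ≫ p ≫ (Spec k).toSpecΓ ≫
          Spec.map (Scheme.ΓSpecIso k).inv := by
      rw [← Scheme.fromSpecStalk_toSpecΓ, Category.assoc, ← Scheme.toSpecΓ_naturality_assoc]
    _ = X.fromSpecStalk (genericPoint X) ≫ p := by simp

/-- The transcendence degree over `F` of the function field of an integral scheme over `F`, where
`F` acts on the function field through `constMap q`. It computes the dimension of every nonempty
affine open without reference to that open. -/
noncomputable def functionFieldTrdeg {F : Type u} [Field F] {Y : Scheme.{u}} [IsIntegral Y]
    (q : Y ⟶ Spec (.of F)) : Cardinal.{u} :=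
  letI : Algebra F Y.functionField := (constMap q).hom.toAlgebra
  Algebra.trdeg F Y.functionField

theorem comp_germToFunctionField_eq_constMap {k : CommRingCat.{u}} [IrreducibleSpace X]
    {p : X ⟶ Spec k} {U : X.Opens} [Nonempty U] (hU : IsAffineOpen U) {a : k ⟶ Γ(X, U)}
    (ha : Spec.map a = hU.fromSpec ≫ p) : a ≫ X.germToFunctionField U = constMap p := by
  apply Spec.map_injective
  rw [Spec.map_comp, ha, SpecMap_constMap, ← Category.assoc]
  congr 1
  exact hU.fromSpecStalk_eq_fromSpecStalk _

theorem ringKrullDim_eq_toENat_functionFieldTrdeg {F : Type u} [Field F] {Y : Scheme.{u}}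
    [IsIntegral Y] (q : Y ⟶ Spec (.of F)) {U : Y.Opens} [Nonempty U] (hU : IsAffineOpen U)
    [Algebra F Γ(Y, U)] [Algebra.FiniteType F Γ(Y, U)]
    (h : Spec.map (CommRingCat.ofHom (algebraMap F Γ(Y, U))) = hU.fromSpec ≫ q) :
    ringKrullDim Γ(Y, U) = (functionFieldTrdeg q).toENat := by
  let : Algebra F Y.functionField := (constMap q).hom.toAlgebra
  have : IsScalarTower F Γ(Y, U) Y.functionField := .of_algebraMap_eq' <|
    congrArg CommRingCat.Hom.hom (comp_germToFunctionField_eq_constMap hU h).symm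
  have := functionField_isFractionRing_of_isAffineOpen Y U hU
  have : FaithfulSMul Γ(Y, U) Y.functionField :=
    (faithfulSMul_iff_algebraMap_injective _ _).2 (IsFractionRing.injective _ _)
  have : Algebra.IsAlgebraic Γ(Y, U) Y.functionField :=
    IsLocalization.isAlgebraic _ (nonZeroDivisors Γ(Y, U))
  have htrdeg : Algebra.trdeg F Γ(Y, U) = functionFieldTrdeg q := by
    rw [functionFieldTrdeg, ← trdeg_add_eq F Γ(Y, U) (A := Y.functionField),
      trdeg_eq_zero (R := Γ(Y, U)), add_zero]
  rw [ringKrullDim_eq_toENat_trdeg F, htrdeg]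

theorem finiteType_of_SpecMap_eq {F : Type u} [CommRing F] {Y : Scheme.{u}}
    {q : Y ⟶ Spec (.of F)} [LocallyOfFiniteType q] {U : Y.Opens} {hU : IsAffineOpen U}
    [Algebra F Γ(Y, U)]
    (h : Spec.map (CommRingCat.ofHom (algebraMap F Γ(Y, U))) = hU.fromSpec ≫ q) :
    Algebra.FiniteType F Γ(Y, U) := by
  have : LocallyOfFiniteType (Spec.map (CommRingCat.ofHom (algebraMap F Γ(Y, U)))) :=
    h ▸ inferInstance
  exact RingHom.finiteType_algebraMap.1 (HasRingHomProperty.Spec_iff.1 this)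

theorem exists_algebra_SpecMap_eq {F : Type u} [CommRing F] {Y : Scheme.{u}}
    (q : Y ⟶ Spec (.of F)) {U : Y.Opens} (hU : IsAffineOpen U) :
    ∃ _ : Algebra F Γ(Y, U),
      Spec.map (CommRingCat.ofHom (algebraMap F Γ(Y, U))) = hU.fromSpec ≫ q :=
  ⟨(Spec.preimage (hU.fromSpec ≫ q)).hom.toAlgebra, Spec.map_preimage _⟩

theorem topologicalKrullDim_eq_toENat_functionFieldTrdeg {F : Type u} [Field F] {Y : Scheme.{u}}
    [IsIntegral Y] (q : Y ⟶ Spec (.of F)) [LocallyOfFiniteType q] :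
    topologicalKrullDim Y = (functionFieldTrdeg q).toENat := by
  let ι := {U : Y.affineOpens // Nonempty U.1}
  have hdim (U : ι) : topologicalKrullDim (Spec Γ(Y, U.1)) = (functionFieldTrdeg q).toENat := by
    have := U.2
    obtain ⟨_, h⟩ := exists_algebra_SpecMap_eq q U.1.2
    have := finiteType_of_SpecMap_eq h
    exact (PrimeSpectrum.topologicalKrullDim_eq_ringKrullDim _).trans
      (ringKrullDim_eq_toENat_functionFieldTrdeg q U.1.2 h)
  have hcover : ⋃ U : ι, Set.range U.1.2.fromSpec = Set.univ := by
    refine Set.iUnion_eq_univ_iff.2 fun y ↦ ?_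
    obtain ⟨U, hU, hy, -⟩ := exists_isAffineOpen_mem_and_subset (U := ⊤) (x := y) trivial
    exact ⟨⟨⟨U, hU⟩, ⟨y, hy⟩⟩, hU.range_fromSpec.symm ▸ hy⟩
  obtain ⟨U, -⟩ := Set.iUnion_eq_univ_iff.1 hcover (genericPoint Y)
  have : Nonempty ι := ⟨U⟩
  rw [topologicalKrullDim_eq_iSup_of_isOpenEmbedding
    (fun U ↦ U.1.2.isOpenImmersion_fromSpec.base_open) hcover]
  simp only [hdim, ciSup_const]

theorem exists_isOpenImmersion_tensorProduct {F E : Type u} [CommRing F] [CommRing E] [Algebra F E]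
    {X Y : Scheme.{u}} {q : Y ⟶ Spec (.of F)} {π : X ⟶ Y} {s : X ⟶ Spec (.of E)}
    (hpb : IsPullback π s q (Spec.map (CommRingCat.ofHom (algebraMap F E))))
    {U : Y.Opens} (hU : IsAffineOpen U) [Algebra F Γ(Y, U)]
    (h : Spec.map (CommRingCat.ofHom (algebraMap F Γ(Y, U))) = hU.fromSpec ≫ q) :
    ∃ j : Spec (.of (E ⊗[F] Γ(Y, U))) ⟶ X, IsOpenImmersion j ∧ Set.range j = π ⁻¹' U := by
  have hX : IsPullback (pullback.fst π hU.fromSpec ≫ s) (pullback.snd π hU.fromSpec)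
      (Spec.map (CommRingCat.ofHom (algebraMap F E))) (hU.fromSpec ≫ q) :=
    (IsPullback.of_hasPullback π hU.fromSpec).paste_horiz hpb.flip
  have hSpec := isPullback_SpecMap_of_isPushout _ _ _ _
    (CommRingCat.isPushout_tensorProduct F E Γ(Y, U))
  rw [h] at hSpec
  let e := hSpec.isoIsPullback _ _ hX
  refine ⟨e.hom ≫ pullback.fst π hU.fromSpec, inferInstance, ?_⟩
  rw [Scheme.Hom.comp_base, TopCat.coe_comp, Set.range_comp, e.hom.surjective.range_eq,
    Set.image_univ, Scheme.Pullback.range_fst, hU.range_fromSpec]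

theorem topologicalKrullDim_of_mem_irreducibleComponents_of_isPullback {F E : Type u} [Field F]
    [Field E] [Algebra F E] {X Y : Scheme.{u}} [IsIntegral Y] {q : Y ⟶ Spec (.of F)}
    [LocallyOfFiniteType q] {π : X ⟶ Y} {s : X ⟶ Spec (.of E)}
    (hpb : IsPullback π s q (Spec.map (CommRingCat.ofHom (algebraMap F E))))
    {T : Set X} (hT : T ∈ irreducibleComponents X) :
    topologicalKrullDim T = topologicalKrullDim Y := by
  let ι := {U : Y.affineOpens // (T ∩ π ⁻¹' U).Nonempty}
  choose alg halg using fun U : ι ↦ exists_algebra_SpecMap_eq q U.1.2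
  choose j hj hrange using fun U : ι ↦ exists_isOpenImmersion_tensorProduct hpb U.1.2 (halg U)
  have hdim (U : ι) : topologicalKrullDim (j U ⁻¹' T) = topologicalKrullDim Y := by
    obtain ⟨x, hxT, hxU⟩ := U.2
    have : Nonempty U.1.1 := ⟨⟨π x, hxU⟩⟩
    have := finiteType_of_SpecMap_eq (halg U)
    have hjT : j U ⁻¹' T ∈ irreducibleComponents (Spec (.of (E ⊗[F] Γ(Y, U.1)))) :=
      preimage_mem_irreducibleComponents hT (j U).isOpenEmbedding ⟨x, hxT, hrange U ▸ hxU⟩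
    calc topologicalKrullDim (j U ⁻¹' T)
      _ = ringKrullDim Γ(Y, U.1) :=
        topologicalKrullDim_of_mem_irreducibleComponents_tensorProduct hjT
      _ = topologicalKrullDim Y := by
        rw [ringKrullDim_eq_toENat_functionFieldTrdeg q U.1.2 (halg U),
          topologicalKrullDim_eq_toENat_functionFieldTrdeg q]
  have hcover : ⋃ U : ι, Set.range (T.restrictPreimage (j U)) = Set.univ := by
    refine Set.iUnion_eq_univ_iff.2 fun x ↦ ?_
    obtain ⟨U, hU, hx, -⟩ := exists_isAffineOpen_mem_and_subset (U := ⊤) (x := π x) trivial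
    let V : ι := ⟨⟨U, hU⟩, x, x.2, hx⟩
    have hxV : x.1 ∈ Set.range (j V) := hrange V ▸ hx
    exact ⟨V, by rwa [Set.range_restrictPreimage]⟩
  obtain ⟨x, hxT⟩ := hT.1.nonempty
  obtain ⟨U, -⟩ := Set.iUnion_eq_univ_iff.1 hcover ⟨x, hxT⟩
  have : Nonempty ι := ⟨U⟩
  rw [topologicalKrullDim_eq_iSup_of_isOpenEmbedding
    (fun U ↦ (j U).isOpenEmbedding.restrictPreimage T) hcover]
  simp only [hdim, ciSup_const]

theorem isReduced_subscheme_vanishingIdeal (Z : Closeds X) :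
    IsReduced (Scheme.IdealSheafData.vanishingIdeal Z).subscheme := by
  let I := Scheme.IdealSheafData.vanishingIdeal Z
  have (U : X.affineOpens) : _root_.IsReduced (Γ(X, U) ⧸ I.ideal U) :=
    (Ideal.isRadical_iff_quotient_reduced _).1 (PrimeSpectrum.isRadical_vanishingIdeal _)
  have hSpec (U : X.affineOpens) : IsReduced (Spec (.of (Γ(X, U) ⧸ I.ideal U))) := inferInstance
  have : ∀ U, IsReduced (I.subschemeCover.openCover.X U) := hSpec
  exact IsReduced.of_openCover _ I.subschemeCover.openCover

theorem exists_isClosedImmersion_isIntegral {Z : Set X} (hZc : IsClosed Z) (hZ : IsIrreducible Z) :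
    ∃ (W : Scheme.{u}) (i : W ⟶ X), IsIntegral W ∧ IsClosedImmersion i ∧ Set.range i = Z := by
  let I := Scheme.IdealSheafData.vanishingIdeal ⟨Z, hZc⟩
  have hrange : Set.range I.subschemeι = Z := I.range_subschemeι
  have e := I.subschemeι.isEmbedding.toHomeomorph.trans (Homeomorph.setCongr hrange)
  have := isReduced_subscheme_vanishingIdeal ⟨Z, hZc⟩
  have : IrreducibleSpace I.subscheme :=
    e.irreducibleSpace_iff.2 (isIrreducible_iff_irreducibleSpace.1 hZ)
  exact ⟨I.subscheme, I.subschemeι, isIntegral_of_irreducibleSpace_of_isReduced _, inferInstance,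
    hrange⟩

end Scheme

theorem statement4_general (F : Type u) [Field F] (E : Type u) [Field E] [Algebra F E]
    (Y : Scheme.{u}) (q : Y ⟶ Spec (CommRingCat.of F))
    [LocallyOfFiniteType q]
    (X : Scheme.{u}) (π : X ⟶ Y) (s : X ⟶ Spec (CommRingCat.of E))
    (hpb : IsPullback π s q (Spec.map (CommRingCat.ofHom (algebraMap F E))))
    (Z : Set Y) (hZc : IsClosed Z) (hZirr : IsIrreducible Z)
    (T : Set X)
    (hT : Maximal (fun t : Set X => t ⊆ π.base ⁻¹' Z ∧ IsIrreducible t) T) :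
    topologicalKrullDim ↥T = topologicalKrullDim ↥Z := by
  obtain ⟨W, i, _, _, rfl⟩ := exists_isClosedImmersion_isIntegral hZc hZirr
  let k : pullback π i ⟶ X := pullback.fst π i
  have hpbW : IsPullback (pullback.snd π i) (k ≫ s) (i ≫ q)
      (Spec.map (CommRingCat.ofHom (algebraMap F E))) :=
    ((IsPullback.of_hasPullback π i).paste_horiz hpb.flip).flip
  have hrange : Set.range k = π ⁻¹' Set.range i := Scheme.Pullback.range_fst π i
  rw [← hrange] at hT
  calc topologicalKrullDim T
    _ = topologicalKrullDim (k ⁻¹' T) :=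
      (isHomeomorph_restrictPreimage k.isEmbedding hT.1.1).topologicalKrullDim_eq.symm
    _ = topologicalKrullDim W :=
      topologicalKrullDim_of_mem_irreducibleComponents_of_isPullback hpbW
        (preimage_mem_irreducibleComponents_of_isEmbedding k.isEmbedding hT)
    _ = topologicalKrullDim (Set.range i) :=
      i.isEmbedding.toHomeomorph.isHomeomorph.topologicalKrullDim_eq

/-- Lemma 5.3 of the paper. For the base extension
`X = Y ×_{Spec F} Spec E` of an integral scheme `Y` of finite type over a field `F`, with
projection `π : X → Y`, every irreducible component of the preimage of an irreducible closed
subset `Z ⊆ Y` has the same (topological Krull) dimension as `Z`. -/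
theorem statement4 (F : Type u) [Field F] (E : Type u) [Field E] [Algebra F E]
    (Y : Scheme.{u}) (q : Y ⟶ Spec (CommRingCat.of F))
    [IsIntegral Y] [LocallyOfFiniteType q] [QuasiCompact q]
    (X : Scheme.{u}) (π : X ⟶ Y) (s : X ⟶ Spec (CommRingCat.of E))
    (hpb : IsPullback π s q (Spec.map (CommRingCat.ofHom (algebraMap F E))))
    (Z : Set Y) (hZc : IsClosed Z) (hZirr : IsIrreducible Z)
    (T : Set X)
    (hT : Maximal (fun t : Set X => t ⊆ π.base ⁻¹' Z ∧ IsIrreducible t) T) :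
    topologicalKrullDim ↥T = topologicalKrullDim ↥Z := by
  exact statement4_general F E Y q X π s hpb Z hZc hZirr T hT

end ThcrDM
end

section
/- Let k ⊆ ℓ be algebraically closed uncountable fields, let Y be an integral scheme of finite type over k with a k-automorphism σ: Y → Y, let X = Y ×_{Spec k} Spec ℓ, and let σ_X = σ ×_k id_ℓ be the induced ℓ-automorphism of X. Then (X, σ_X) has good dense orbits if and only if (Y, σ) has good dense orbits. -/
open AlgebraicGeometry CategoryTheory CategoryTheory.Limits TopologicalSpace

universe u

namespace ThcrDM

variable {X : Scheme.{u}}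

/-!
Write `π : X ⟶ Y` for the projection and `D_X`, `D_Y` for the sets of points with dense orbit. As
`k` is algebraically closed, `π` is open and surjective with irreducible fibres. Points of `D_X`
map into `D_Y`, and the generic point of the fibre over a point of `D_Y` lies in `D_X`, so
`D_Y = π(D_X)` is open when `D_X` is.

Conversely, suppose that `D_Y` is open, let `π(w) ∈ D_Y`, and let `V` be a nonempty open subset of
`X`. In some chart `Spec (ℓ ⊗ A)` the set `V` contains the nonvanishing locus of a non-nilpotent
function `f`. The composite `Spec κ(w) ⟶ Y` and the coefficients of `f` are defined over a finitely
generated `k`-subalgebra `R` of `κ(w)`, and `Spec R` maps into `D_Y` because `D_Y` contains a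
neighbourhood of `π(w)`. By the Nullstellensatz, `R` has a `k`-rational point `t` at which the
specialization of `f` to a function on `Spec A` is still not nilpotent. Some iterate of `σ` moves
the image of `t` in `Y` into the nonvanishing locus of this specialization, hence moves the whole
spectrum of the local ring `R_t` into the chart, with `f` taking a unit value there. At the generic
point of `Spec R_t` this says that the same iterate of `σ_X` moves `w` into `V`, so
`D_X = π⁻¹(D_Y)`.
-/

open scoped TensorProduct

section Powers

variable {C : Type*} [Category* C] {A B : C}

/-- The power `σ ^ n`, for `n : ℤ`, taken in the group `Aut A` of automorphisms of an object. -/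
def isoZPow (σ : A ≅ A) (n : ℤ) : A ≅ A :=
  ((show Aut A from σ) ^ n : Aut A)

theorem isoZPow_zero (σ : A ≅ A) : isoZPow σ 0 = Iso.refl A :=
  zpow_zero (show Aut A from σ)

theorem isoZPow_add_one (σ : A ≅ A) (n : ℤ) : isoZPow σ (n + 1) = σ ≪≫ isoZPow σ n :=
  zpow_add_one (show Aut A from σ) n

theorem isoZPow_sub_one (σ : A ≅ A) (n : ℤ) : isoZPow σ (n - 1) = σ.symm ≪≫ isoZPow σ n :=
  zpow_sub_one (show Aut A from σ) n

theorem isoZPow_refl (n : ℤ) : isoZPow (Iso.refl A) n = Iso.refl A :=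
  one_zpow (α := Aut A) n

theorem isoZPow_hom_comp {σ : A ≅ A} {τ : B ≅ B} {f : A ⟶ B}
    (h : σ.hom ≫ f = f ≫ τ.hom) (n : ℤ) : (isoZPow σ n).hom ≫ f = f ≫ (isoZPow τ n).hom := by
  have h_inv : σ.inv ≫ f = f ≫ τ.inv := by
    rw [Iso.inv_comp_eq, reassoc_of% h, Iso.hom_inv_id, Category.comp_id]
  induction n using Int.induction_on with
  | zero => simp [isoZPow_zero]
  | succ n ih => simp [isoZPow_add_one, ih, reassoc_of% h]
  | pred n ih => simp [isoZPow_sub_one, ih, reassoc_of% h_inv]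

theorem isoZPow_hom_comp_of_hom_comp_eq {σ : A ≅ A} {f : A ⟶ B} (h : σ.hom ≫ f = f) (n : ℤ) :
    (isoZPow σ n).hom ≫ f = f := by
  simpa [isoZPow_refl] using isoZPow_hom_comp (τ := Iso.refl B) (by simpa using h) n

end Powers

section Orbits

theorem iter_eq_isoZPow (σ : X ≅ X) (n : ℤ) (x : X) : iter σ n x = (isoZPow σ n).hom x := by
  have h_neg (x : X) : σ.inv x = (isoZPow σ (-1)).hom x := by
    rw [← zero_sub, isoZPow_sub_one, isoZPow_zero]
    simp
  cases n with
  | ofNat n =>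
    induction n generalizing x with
    | zero => simp [iter, isoZPow_zero]
    | succ n ih =>
      have : isoZPow σ (Int.ofNat (n + 1)) = σ ≪≫ isoZPow σ (Int.ofNat n) :=
        isoZPow_add_one σ n
      rw [this, Iso.trans_hom, Scheme.Hom.comp_apply, ← ih]
      rfl
  | negSucc n =>
    induction n generalizing x with
    | zero => exact h_neg x
    | succ n ih =>
      have : isoZPow σ (Int.negSucc (n + 1)) = σ.symm ≪≫ isoZPow σ (Int.negSucc n) :=
        isoZPow_sub_one σ (Int.negSucc n)
      rw [this, Iso.trans_hom, Iso.symm_hom, Scheme.Hom.comp_apply, ← ih]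
      rfl

theorem orbit_eq_range_isoZPow (σ : X ≅ X) (x : X) :
    orbit σ x = Set.range fun n : ℤ => (isoZPow σ n).hom x := by
  simp only [orbit, iter_eq_isoZPow]

theorem dense_orbit_iff {σ : X ≅ X} {x : X} : Dense (orbit σ x) ↔
    ∀ U : Set X, IsOpen U → U.Nonempty → ∃ n : ℤ, (isoZPow σ n).hom x ∈ U := by
  rw [orbit_eq_range_isoZPow]
  simp [dense_iff_inter_open, Set.Nonempty]

variable {Y : Scheme.{u}} {σ : Y ≅ Y} {τ : X ≅ X} {π : X ⟶ Y}

theorem isoZPow_hom_apply (h : τ.hom ≫ π = π ≫ σ.hom) (n : ℤ) (x : X) :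
    π ((isoZPow τ n).hom x) = (isoZPow σ n).hom (π x) := by
  rw [← Scheme.Hom.comp_apply, isoZPow_hom_comp h, Scheme.Hom.comp_apply]

theorem dense_orbit_apply [Surjective π] (h : τ.hom ≫ π = π ≫ σ.hom) {x : X}
    (hx : Dense (orbit τ x)) : Dense (orbit σ (π x)) := by
  rw [dense_orbit_iff] at hx ⊢
  intro U hU hU_ne
  obtain ⟨n, hn⟩ := hx (π ⁻¹' U) (hU.preimage π.continuous) (hU_ne.preimage π.surjective)
  exact ⟨n, isoZPow_hom_apply h n x ▸ hn⟩

theorem dense_orbit_of_forall_specializes (hπ : IsOpenMap π) (h : τ.hom ≫ π = π ≫ σ.hom) {x : X}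
    (hx : ∀ x', π x' = π x → x ⤳ x') (hy : Dense (orbit σ (π x))) : Dense (orbit τ x) := by
  rw [dense_orbit_iff] at hy ⊢
  intro V hV hV_ne
  obtain ⟨n, v, hvV, hv⟩ := hy (π '' V) (hπ V hV) (hV_ne.image π)
  obtain ⟨v', rfl⟩ := (isoZPow τ n).hom.surjective v
  have hv' : π v' = π x := (isoZPow σ n).hom.isOpenEmbedding.injective (by
    rw [← isoZPow_hom_apply h, hv])
  exact ⟨n, ((hx v' hv').map (isoZPow τ n).hom.continuous).mem_open hV hvV⟩

end Orbits

section Specialization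

section CommRing

variable {k A B : Type*} [CommRing k] [CommRing A] [CommRing B] [Algebra k A] [Algebra k B]

/-- The specialization `B ⊗[k] A → A` of the coefficients in `B` along a `k`-rational point
`t : B →ₐ[k] k` of `B`. -/
noncomputable def specialize (A : Type*) [CommRing A] [Algebra k A] (t : B →ₐ[k] k) :
    B ⊗[k] A →ₐ[k] A :=
  Algebra.TensorProduct.productMap ((Algebra.ofId k A).comp t) (AlgHom.id k A)

theorem specialize_map {A' : Type*} [CommRing A'] [Algebra k A'] (f : A →ₐ[k] A') (t : B →ₐ[k] k)
    (F : B ⊗[k] A) :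
    specialize A' t (Algebra.TensorProduct.map (AlgHom.id k B) f F) = f (specialize A t F) := by
  simp only [← AlgHom.comp_apply]
  congr 1
  ext <;> simp [specialize, Algebra.ofId_apply]

theorem algHom_specialize (t : B →ₐ[k] k) (ψ : A →ₐ[k] B) (F : B ⊗[k] A) :
    t (ψ (specialize A t F)) = t (Algebra.TensorProduct.productMap (AlgHom.id k B) ψ F) := by
  simp only [← AlgHom.comp_apply]
  congr 1
  ext <;> simp [specialize, Algebra.ofId_apply]

theorem productMap_comp_apply_of_map_eq {C Ω : Type*} [CommRing C] [CommRing Ω] [Algebra k C]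
    [Algebra k Ω] {α : C →ₐ[k] Ω} {ι : B →ₐ[k] Ω} {f : C ⊗[k] A} {F : B ⊗[k] A}
    (h : Algebra.TensorProduct.map ι (AlgHom.id k A) F =
      Algebra.TensorProduct.map α (AlgHom.id k A) f) (ψ : A →ₐ[k] B) :
    Algebra.TensorProduct.productMap α (ι.comp ψ) f =
      ι (Algebra.TensorProduct.productMap (AlgHom.id k B) ψ F) := by
  trans Algebra.TensorProduct.productMap (AlgHom.id k Ω) (ι.comp ψ)
    (Algebra.TensorProduct.map α (AlgHom.id k A) f)
  · simp only [← AlgHom.comp_apply]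
    congr 1
    ext <;> simp
  · rw [← h]
    simp only [← AlgHom.comp_apply]
    congr 1
    ext <;> simp

theorem exists_fg_forall_le_mem_range_map_val (F : B ⊗[k] A) :
    ∃ R : Subalgebra k B, R.FG ∧
      ∀ S, R ≤ S → F ∈ Set.range (Algebra.TensorProduct.map S.val (AlgHom.id k A)) := by
  obtain ⟨R, hR, G, rfl⟩ := TensorProduct.Algebra.exists_of_fg F
  refine ⟨R, hR, fun S hS => ⟨Algebra.TensorProduct.map (Subalgebra.inclusion hS) (.id k A) G, ?_⟩⟩
  rw [← AlgHom.comp_apply, ← Algebra.TensorProduct.map_comp]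
  rfl

end CommRing

variable {k : Type*} [Field k] {A B : Type*} [CommRing A] [CommRing B] [Algebra k A] [Algebra k B]

theorem exists_forall_specialize_ne_zero {F : B ⊗[k] A} (hF : F ≠ 0) :
    ∃ b : B, b ≠ 0 ∧ ∀ t : B →ₐ[k] k, t b ≠ 0 → specialize A t F ≠ 0 := by
  let e := Module.Basis.ofVectorSpace k A
  let E := Algebra.TensorProduct.basis B e
  obtain ⟨i, hi⟩ := Finsupp.ne_iff.mp (E.repr.map_ne_zero_iff.mpr hF)
  have coord_specialize (t : B →ₐ[k] k) (G : B ⊗[k] A) :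
      e.repr (specialize A t G) i = t (E.repr G i) := by
    induction G with
    | zero => simp
    | add G H hG hH => simp only [map_add, Finsupp.add_apply, hG, hH]
    | tmul b a => simp [E, specialize, ← Algebra.smul_def, Algebra.ofId_apply]
  refine ⟨E.repr F i, hi, fun t ht h => ht ?_⟩
  rw [← coord_specialize, h, map_zero, Finsupp.zero_apply]

theorem exists_forall_not_isNilpotent_specialize {F : B ⊗[k] A} (hF : ¬ IsNilpotent F) :
    ∃ b : B, b ≠ 0 ∧ ∀ t : B →ₐ[k] k, t b ≠ 0 → ¬ IsNilpotent (specialize A t F) := by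
  rw [nilpotent_iff_mem_prime] at hF
  push Not at hF
  obtain ⟨P, hP, hFP⟩ := hF
  let p : Ideal A := P.comap (Algebra.TensorProduct.includeRight : A →ₐ[k] B ⊗[k] A)
  let F_bar : B ⊗[k] (A ⧸ p) :=
    Algebra.TensorProduct.map (AlgHom.id k B) (Ideal.Quotient.mkₐ k p) F
  let g : B ⊗[k] (A ⧸ p) →ₐ[k] (B ⊗[k] A) ⧸ P := Algebra.TensorProduct.productMap
    ((Ideal.Quotient.mkₐ k P).comp Algebra.TensorProduct.includeLeft)
    (Ideal.quotientMapₐ P Algebra.TensorProduct.includeRight le_rfl)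
  have g_F_bar : g F_bar = Ideal.Quotient.mkₐ k P F := by
    simp only [F_bar, ← AlgHom.comp_apply]
    congr 1
    ext <;> simp [g, ← map_mul]
  have F_bar_ne_zero : F_bar ≠ 0 := fun h =>
    hFP (Ideal.Quotient.eq_zero_iff_mem.mp (g_F_bar.symm.trans (h ▸ map_zero g)))
  obtain ⟨b, hb, hbF⟩ := exists_forall_specialize_ne_zero F_bar_ne_zero
  refine ⟨b, hb, fun t ht h => hbF t ht ?_⟩
  rw [specialize_map]
  exact (h.map (Ideal.Quotient.mkₐ k p)).eq_zero

theorem exists_algHom_apply_ne_zero [IsAlgClosed k] {R : Type*} [CommRing R] [Algebra k R]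
    [Algebra.FiniteType k R] {r : R} (hr : ¬ IsNilpotent r) : ∃ t : R →ₐ[k] k, t r ≠ 0 := by
  have : IsJacobsonRing R := isJacobsonRing_of_finiteType (A := k)
  obtain ⟨m, hm, hrm⟩ : ∃ m : Ideal R, m.IsMaximal ∧ r ∉ m := by
    rw [← mem_nilradical, nilradical, Ideal.radical_eq_jacobson, Ideal.jacobson,
      Ideal.mem_sInf] at hr
    push Not at hr
    obtain ⟨m, ⟨-, hm⟩, hrm⟩ := hr
    exact ⟨m, hm, hrm⟩
  let : Field (R ⧸ m) := Ideal.Quotient.field m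
  have : Algebra.FiniteType k (R ⧸ m) :=
    Algebra.FiniteType.of_surjective (Ideal.Quotient.mkₐ k m) (Ideal.Quotient.mkₐ_surjective k m)
  have : Module.Finite k (R ⧸ m) := finite_of_finite_type_of_isJacobsonRing k (R ⧸ m)
  let e : k ≃ₐ[k] R ⧸ m := AlgEquiv.ofBijective (Algebra.ofId k (R ⧸ m))
    IsAlgClosed.algebraMap_bijective_of_isIntegral
  refine ⟨e.symm.toAlgHom.comp (Ideal.Quotient.mkₐ k m), fun h => hrm ?_⟩
  exact Ideal.Quotient.eq_zero_iff_mem.mp (e.symm.map_eq_zero_iff.mp h)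

theorem isDomain_tensorProduct [IsAlgClosed k] [IsDomain A] [IsDomain B] :
    IsDomain (B ⊗[k] A) := by
  have : NoZeroDivisors (B ⊗[k] A) := by
    refine ⟨fun {F G} hFG => ?_⟩
    by_contra! hne
    obtain ⟨R, hR, hFR⟩ := exists_fg_forall_le_mem_range_map_val F
    obtain ⟨S, hS, hGS⟩ := exists_fg_forall_le_mem_range_map_val G
    obtain ⟨F', rfl⟩ := hFR (R ⊔ S) le_sup_left
    obtain ⟨G', rfl⟩ := hGS (R ⊔ S) le_sup_right
    have : Algebra.FiniteType k ↥(R ⊔ S) := (Subalgebra.fg_iff_finiteType _).mp (hR.sup hS)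
    have map_injective : Function.Injective
        (Algebra.TensorProduct.map (R ⊔ S).val (AlgHom.id k A)) :=
      Module.Flat.rTensor_preserves_injective_linearMap (R ⊔ S).val.toLinearMap
        Subtype.val_injective
    obtain ⟨b, hb, hbF⟩ := exists_forall_specialize_ne_zero
      (ne_of_apply_ne _ (hne.1.trans_eq (map_zero _).symm))
    obtain ⟨c, hc, hcG⟩ := exists_forall_specialize_ne_zero
      (ne_of_apply_ne _ (hne.2.trans_eq (map_zero _).symm))
    obtain ⟨t, ht⟩ := exists_algHom_apply_ne_zero (k := k)
      (isNilpotent_iff_eq_zero.not.mpr (mul_ne_zero hb hc))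
    rw [map_mul, mul_ne_zero_iff] at ht
    refine mul_ne_zero (hbF t ht.1) (hcG t ht.2) ?_
    rw [← map_mul, (map_eq_zero_iff _ map_injective).mp ((map_mul _ F' G').trans hFG), map_zero]
  exact NoZeroDivisors.to_isDomain _

section LocalModel

theorem isLocalHom_of_algHom_to_base {O : Type*} [CommRing O] [IsLocalRing O] [Algebra k O]
    (t : O →ₐ[k] k) : IsLocalHom t.toRingHom :=
  .of_surjective t.toRingHom fun r => ⟨algebraMap k O r, t.commutes r⟩

variable {Ω : Type u} [Field Ω] [Algebra k Ω]

theorem exists_localRing_factorization {R : Type u} [CommRing R] [Algebra k R]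
    {i : R →ₐ[k] Ω} (hi : Function.Injective i) (t : R →ₐ[k] k) :
    ∃ (O : Type u) (_ : CommRing O) (_ : Algebra k O) (_ : IsLocalRing O)
      (a : R →ₐ[k] O) (ι : O →ₐ[k] Ω) (t' : O →ₐ[k] k), ι.comp a = i ∧ t'.comp a = t := by
  let p : Ideal R := RingHom.ker t
  have : p.IsPrime := RingHom.ker_isPrime t
  have t_ne_zero (y : p.primeCompl) : t y ≠ 0 := y.2
  have i_ne_zero (y : p.primeCompl) : i y ≠ 0 := fun h =>
    t_ne_zero y (by rw [(map_eq_zero_iff i hi).mp h, map_zero])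
  refine ⟨Localization.AtPrime p, inferInstance, inferInstance, inferInstance,
    IsScalarTower.toAlgHom k R _,
    IsLocalization.liftAlgHom (M := p.primeCompl) fun y => (i_ne_zero y).isUnit,
    IsLocalization.liftAlgHom (M := p.primeCompl) fun y => (t_ne_zero y).isUnit, ?_, ?_⟩ <;>
  · ext
    simp

theorem exists_localRing_not_isNilpotent_specialize [IsAlgClosed k] [Algebra.FiniteType k B]
    (φ : B →ₐ[k] Ω) {F : Ω ⊗[k] A} (hF : ¬ IsNilpotent F) :
    ∃ (O : Type u) (_ : CommRing O) (_ : Algebra k O) (_ : IsLocalRing O) (ι : O →ₐ[k] Ω)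
      (t : O →ₐ[k] k) (φ' : B →ₐ[k] O) (F' : O ⊗[k] A), ι.comp φ' = φ ∧
      Algebra.TensorProduct.map ι (AlgHom.id k A) F' = F ∧ ¬ IsNilpotent (specialize A t F') := by
  obtain ⟨S, hS, hFS⟩ := exists_fg_forall_le_mem_range_map_val F
  let R : Subalgebra k Ω := φ.range ⊔ S
  have : Algebra.FiniteType k φ.range := .of_surjective φ.rangeRestrict φ.rangeRestrict_surjective
  have hR : Algebra.FiniteType k R :=
    (Subalgebra.fg_iff_finiteType _).mp (((Subalgebra.fg_iff_finiteType _).mpr this).sup hS)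
  obtain ⟨F, rfl⟩ := hFS R le_sup_right
  obtain ⟨b, hb, hbF⟩ := exists_forall_not_isNilpotent_specialize fun h => hF (h.map _)
  obtain ⟨t, ht⟩ := exists_algHom_apply_ne_zero (k := k) (isNilpotent_iff_eq_zero.not.mpr hb)
  obtain ⟨O, _, _, _, a, ι, t', hι, rfl⟩ :=
    exists_localRing_factorization (i := R.val) Subtype.val_injective t
  refine ⟨O, _, _, inferInstance, ι, t',
    a.comp ((Subalgebra.inclusion le_sup_left).comp φ.rangeRestrict),
    Algebra.TensorProduct.map a (AlgHom.id k A) F, ?_, ?_, ?_⟩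
  · rw [← AlgHom.comp_assoc, hι]
    rfl
  · rw [← AlgHom.comp_apply, ← Algebra.TensorProduct.map_comp, hι]
    rfl
  · convert hbF _ ht using 2
    simp only [← AlgHom.comp_apply]
    congr 1
    ext <;> simp [specialize]

end LocalModel

end Specialization

section Charts

variable {k : Type u} [CommRing k] {A B : Type u} [CommRing A] [CommRing B] [Algebra k A]
  [Algebra k B]

/-- The morphism `Spec B ⟶ Spec A` of affine schemes given by a homomorphism of `k`-algebras. -/
noncomputable def specMap (φ : A →ₐ[k] B) : Spec (CommRingCat.of B) ⟶ Spec (CommRingCat.of A) :=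
  Spec.map (CommRingCat.ofHom φ.toRingHom)

theorem specMap_comp {D : Type u} [CommRing D] [Algebra k D] (φ : A →ₐ[k] B) (ψ : B →ₐ[k] D) :
    specMap (ψ.comp φ) = specMap ψ ≫ specMap φ :=
  Spec.map_comp (CommRingCat.ofHom φ.toRingHom) (CommRingCat.ofHom ψ.toRingHom)

theorem specMap_comp_algebraMap (φ : A →ₐ[k] B) :
    specMap φ ≫ Spec.map (CommRingCat.ofHom (algebraMap k A)) =
      Spec.map (CommRingCat.ofHom (algebraMap k B)) := by
  rw [specMap, ← Spec.map_comp, ← CommRingCat.ofHom_comp]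
  exact congrArg (fun f => Spec.map (CommRingCat.ofHom f)) φ.comp_algebraMap

theorem exists_specMap_eq (f : Spec (CommRingCat.of B) ⟶ Spec (CommRingCat.of A))
    (hf : f ≫ Spec.map (CommRingCat.ofHom (algebraMap k A)) =
      Spec.map (CommRingCat.ofHom (algebraMap k B))) :
    ∃ φ : A →ₐ[k] B, specMap φ = f := by
  obtain ⟨φ, rfl⟩ := Spec.map_surjective f
  rw [← Spec.map_comp] at hf
  exact ⟨⟨φ.hom, fun r => congr($(Spec.map_injective hf).hom r)⟩, rfl⟩

variable {Y : Scheme.{u}} {q : Y ⟶ Spec (CommRingCat.of k)}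

theorem exists_specMap_comp_eq {j : Spec (CommRingCat.of A) ⟶ Y} [IsOpenImmersion j]
    (hj : j ≫ q = Spec.map (CommRingCat.ofHom (algebraMap k A)))
    {g : Spec (CommRingCat.of B) ⟶ Y}
    (hg : g ≫ q = Spec.map (CommRingCat.ofHom (algebraMap k B)))
    (h_range : Set.range g ⊆ Set.range j) : ∃ φ : A →ₐ[k] B, specMap φ ≫ j = g := by
  obtain ⟨φ, hφ⟩ := exists_specMap_eq (IsOpenImmersion.lift j g h_range) (by
    rw [← hj, IsOpenImmersion.lift_fac_assoc, hg])
  exact ⟨φ, by rw [hφ, IsOpenImmersion.lift_fac]⟩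

theorem exists_affine_chart (q : Y ⟶ Spec (CommRingCat.of k)) [LocallyOfFiniteType q]
    {U : Set Y} (hU : IsOpen U) {y : Y} (hy : y ∈ U) :
    ∃ (A : Type u) (_ : CommRing A) (_ : Algebra k A) (j : Spec (CommRingCat.of A) ⟶ Y),
      Algebra.FiniteType k A ∧ IsOpenImmersion j ∧
      j ≫ q = Spec.map (CommRingCat.ofHom (algebraMap k A)) ∧ y ∈ Set.range j ∧
      Set.range j ⊆ U := by
  obtain ⟨V, hV, hyV, hVU⟩ :=
    Opens.isBasis_iff_nbhd.mp Y.isBasis_affineOpens (U := ⟨U, hU⟩) hy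
  replace hV : IsAffineOpen V := hV
  obtain ⟨φ, hφ⟩ := Spec.map_surjective (hV.fromSpec ≫ q)
  let : Algebra k Γ(Y, V) := φ.hom.toAlgebra
  refine ⟨Γ(Y, V), inferInstance, inferInstance, hV.fromSpec, ?_, inferInstance, hφ.symm, ?_, ?_⟩
  · have : LocallyOfFiniteType (Spec.map φ) := hφ ▸ inferInstance
    exact (HasRingHomProperty.Spec_iff (P := @LocallyOfFiniteType)).mp this
  · rwa [hV.range_fromSpec]
  · rwa [hV.range_fromSpec]

end Charts

section BaseChange

variable {k ℓ : Type u} [CommRing k] [CommRing ℓ] [Algebra k ℓ]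
  {Y : Scheme.{u}} {q : Y ⟶ Spec (CommRingCat.of k)} {π : X ⟶ Y} {s : X ⟶ Spec (CommRingCat.of ℓ)}
  {A : Type u} [CommRing A] [Algebra k A] {j : Spec (CommRingCat.of A) ⟶ Y}

/-- The base change `Spec (ℓ ⊗[k] A) ⟶ X` to `ℓ` of a `k`-morphism `j : Spec A ⟶ Y`. -/
noncomputable def baseChangeMap
    (hpb : IsPullback π s q (Spec.map (CommRingCat.ofHom (algebraMap k ℓ))))
    (hj : j ≫ q = Spec.map (CommRingCat.ofHom (algebraMap k A))) :
    Spec (CommRingCat.of (ℓ ⊗[k] A)) ⟶ X :=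
  hpb.lift (specMap (Algebra.TensorProduct.includeRight : A →ₐ[k] ℓ ⊗[k] A) ≫ j)
    (specMap (Algebra.TensorProduct.includeLeft : ℓ →ₐ[k] ℓ ⊗[k] A)) (by
      rw [Category.assoc, hj, specMap_comp_algebraMap, specMap_comp_algebraMap])

variable (hpb : IsPullback π s q (Spec.map (CommRingCat.ofHom (algebraMap k ℓ))))
  (hj : j ≫ q = Spec.map (CommRingCat.ofHom (algebraMap k A)))

theorem baseChangeMap_fst : baseChangeMap hpb hj ≫ π =
    specMap (Algebra.TensorProduct.includeRight : A →ₐ[k] ℓ ⊗[k] A) ≫ j :=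
  hpb.lift_fst _ _ _

theorem baseChangeMap_snd : baseChangeMap hpb hj ≫ s =
    specMap (Algebra.TensorProduct.includeLeft : ℓ →ₐ[k] ℓ ⊗[k] A) :=
  hpb.lift_snd _ _ _

theorem range_baseChangeMap : Set.range (baseChangeMap hpb hj) = π ⁻¹' Set.range j := by
  have h : IsPullback (baseChangeMap hpb hj)
      (specMap (Algebra.TensorProduct.includeRight : A →ₐ[k] ℓ ⊗[k] A)) π j := by
    refine .of_right ?_ (baseChangeMap_fst hpb hj) hpb.flip
    rw [baseChangeMap_snd, hj]
    exact isPullback_SpecMap_of_isPushout _ _ _ _ (CommRingCat.isPushout_tensorProduct k ℓ A)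
  rw [← Scheme.Pullback.range_fst, ← h.isoPullback_hom_fst]
  exact (h.isoPullback.hom.surjective.range_comp _).symm ▸ rfl

theorem eq_specMap_productMap_comp_baseChangeMap {B : Type u} [CommRing B] [Algebra k B]
    {α : ℓ →ₐ[k] B} {χ : A →ₐ[k] B} {x : Spec (CommRingCat.of B) ⟶ X}
    (hs : x ≫ s = specMap α) (hπ : x ≫ π = specMap χ ≫ j) :
    x = specMap (Algebra.TensorProduct.productMap α χ) ≫ baseChangeMap hpb hj := by
  apply hpb.hom_ext
  · rw [hπ, Category.assoc, baseChangeMap_fst, ← Category.assoc, ← specMap_comp,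
      Algebra.TensorProduct.productMap_right]
  · rw [hs, Category.assoc, baseChangeMap_snd, ← specMap_comp,
      Algebra.TensorProduct.productMap_left]

end BaseChange

section FieldExtension

variable {k ℓ : Type u} [Field k] [Field ℓ] [Algebra k ℓ] {Y : Scheme.{u}}
  {q : Y ⟶ Spec (CommRingCat.of k)} {π : X ⟶ Y} {s : X ⟶ Spec (CommRingCat.of ℓ)}

theorem isOpenMap_fst_of_isPullback
    (hpb : IsPullback π s q (Spec.map (CommRingCat.ofHom (algebraMap k ℓ)))) :
    IsOpenMap π := by
  have : Subsingleton (Spec (CommRingCat.of k)) := inferInstanceAs (Subsingleton (PrimeSpectrum k))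
  have : UniversallyOpen π := MorphismProperty.of_isPullback hpb.flip
    (inferInstance : UniversallyOpen (Spec.map (CommRingCat.ofHom (algebraMap k ℓ))))
  exact π.isOpenMap

theorem exists_fiber_generic_point [IsAlgClosed k]
    (hpb : IsPullback π s q (Spec.map (CommRingCat.ofHom (algebraMap k ℓ)))) (y : Y) :
    ∃ x, π x = y ∧ ∀ x', π x' = y → x ⤳ x' := by
  let K : Type u := Y.residueField y
  let : Field K := inferInstanceAs (Field (Y.residueField y))
  obtain ⟨φ, hφ⟩ := Spec.map_surjective (Y.fromSpecResidueField y ≫ q)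
  let : Algebra k K := φ.hom.toAlgebra
  have h_range : Set.range (baseChangeMap (A := K) hpb hφ.symm) = π ⁻¹' {y} := by
    rw [range_baseChangeMap, Y.range_fromSpecResidueField]
  have : IsDomain (ℓ ⊗[k] K) := isDomain_tensorProduct
  refine ⟨baseChangeMap (A := K) hpb hφ.symm (⊥ : PrimeSpectrum (ℓ ⊗[k] K)),
    h_range.le ⟨_, rfl⟩, fun x' hx' => ?_⟩
  obtain ⟨z, rfl⟩ := h_range.ge hx'
  exact ((PrimeSpectrum.le_iff_specializes _ _).mp bot_le).map (Scheme.Hom.continuous _)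

end FieldExtension

section DenseOrbits

variable {k : Type u} [Field k] {Y : Scheme.{u}} {q : Y ⟶ Spec (CommRingCat.of k)} {σ : Y ≅ Y}

theorem specMap_apply_mem_basicOpen_iff {A K : Type u} [CommRing A] [Field K] [Algebra k A]
    [Algebra k K] {φ : A →ₐ[k] K} {f : A} {z : Spec (CommRingCat.of K)} :
    specMap φ z ∈ (PrimeSpectrum.basicOpen f : Set (PrimeSpectrum A)) ↔ φ f ≠ 0 := by
  obtain rfl : z = (⊥ : PrimeSpectrum K) := Subsingleton.elim (α := PrimeSpectrum K) _ _
  change φ f ∉ (⊥ : Ideal K) ↔ _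
  simp

theorem specMap_apply_eq_closedPoint {O : Type u} [CommRing O] [IsLocalRing O] [Algebra k O]
    (t : O →ₐ[k] k) (z : Spec (CommRingCat.of k)) : specMap t z = IsLocalRing.closedPoint O := by
  have := isLocalHom_of_algHom_to_base t
  obtain rfl : z = IsLocalRing.closedPoint k := Subsingleton.elim (α := PrimeSpectrum k) _ _
  exact IsLocalRing.comap_closedPoint t.toRingHom

theorem exists_isUnit_productMap_of_dense_orbit (hσ : σ.hom ≫ q = q)
    {O : Type u} [CommRing O] [IsLocalRing O] [Algebra k O] (t : O →ₐ[k] k)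
    {g : Spec (CommRingCat.of O) ⟶ Y}
    (hg : g ≫ q = Spec.map (CommRingCat.ofHom (algebraMap k O)))
    (hy : Dense (orbit σ (g (IsLocalRing.closedPoint O))))
    {A : Type u} [CommRing A] [Algebra k A] {j : Spec (CommRingCat.of A) ⟶ Y} [IsOpenImmersion j]
    (hj : j ≫ q = Spec.map (CommRingCat.ofHom (algebraMap k A)))
    {F : O ⊗[k] A} (hF : ¬ IsNilpotent (specialize A t F)) :
    ∃ (n : ℤ) (ψ : A →ₐ[k] O), specMap ψ ≫ j = g ≫ (isoZPow σ n).hom ∧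
      IsUnit (Algebra.TensorProduct.productMap (AlgHom.id k O) ψ F) := by
  have := isLocalHom_of_algHom_to_base t
  obtain ⟨P, hP, hFP⟩ : ∃ P : Ideal A, P.IsPrime ∧ specialize A t F ∉ P := by
    simpa [nilpotent_iff_mem_prime] using hF
  obtain ⟨n, a, haF, ha⟩ := dense_orbit_iff.mp hy
    (j '' (PrimeSpectrum.basicOpen (specialize A t F) : Set (PrimeSpectrum A)))
    (j.isOpenEmbedding.isOpenMap _ (PrimeSpectrum.basicOpen _).2)
    ⟨_, (⟨P, hP⟩ : PrimeSpectrum A), hFP, rfl⟩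
  have h_range : Set.range (g ≫ (isoZPow σ n).hom) ⊆ Set.range j := by
    have h_top := Scheme.preimage_eq_top_of_closedPoint_mem (R := CommRingCat.of O)
      (f := g ≫ (isoZPow σ n).hom) (U := j.opensRange)
      ⟨a, ha.trans (Scheme.Hom.comp_apply _ _ _).symm⟩
    rintro _ ⟨p, rfl⟩
    exact h_top.ge (Set.mem_univ p)
  obtain ⟨ψ, hψ⟩ := exists_specMap_comp_eq hj (by
    rw [Category.assoc, isoZPow_hom_comp_of_hom_comp_eq hσ, hg]) h_range
  refine ⟨n, ψ, hψ, isUnit_of_map_unit t.toRingHom _ (Ne.isUnit ?_)⟩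
  let z : Spec (CommRingCat.of k) := IsLocalRing.closedPoint k
  have h_closedPoint : specMap (t.comp ψ) z = a := by
    apply j.isOpenEmbedding.injective
    rw [ha, specMap_comp, Scheme.Hom.comp_apply, ← Scheme.Hom.comp_apply (specMap ψ), hψ,
      Scheme.Hom.comp_apply, specMap_apply_eq_closedPoint]
  have h_ne_zero := specMap_apply_mem_basicOpen_iff.mp (h_closedPoint.symm ▸ haF)
  exact fun h => h_ne_zero ((algHom_specialize t ψ F).trans h)

theorem exists_fromSpec_field_lift {ℓ : Type u} [Field ℓ] [Algebra k ℓ]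
    {π : X ⟶ Y} {s : X ⟶ Spec (CommRingCat.of ℓ)}
    (hpb : IsPullback π s q (Spec.map (CommRingCat.ofHom (algebraMap k ℓ))))
    {A : Type u} [CommRing A] [Algebra k A] {j : Spec (CommRingCat.of A) ⟶ Y} [IsOpenImmersion j]
    (hj : j ≫ q = Spec.map (CommRingCat.ofHom (algebraMap k A))) {x : X}
    (hx : π x ∈ Set.range j) :
    ∃ (Ω : Type u) (_ : Field Ω) (_ : Algebra k Ω) (ξ : Spec (CommRingCat.of Ω) ⟶ X)
      (α : ℓ →ₐ[k] Ω) (φ : A →ₐ[k] Ω), ξ ≫ s = specMap α ∧ ξ ≫ π = specMap φ ≫ j ∧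
      ∀ z, ξ z = x := by
  let Ω : Type u := X.residueField x
  let : Field Ω := inferInstanceAs (Field (X.residueField x))
  let ξ : Spec (CommRingCat.of Ω) ⟶ X := X.fromSpecResidueField x
  have hξ (z) : ξ z = x := X.fromSpecResidueField_apply x z
  obtain ⟨α, hα⟩ := Spec.map_surjective (ξ ≫ s)
  let : Algebra k Ω := (α.hom.comp (algebraMap k ℓ)).toAlgebra
  have h_over : (ξ ≫ π) ≫ q = Spec.map (CommRingCat.ofHom (algebraMap k Ω)) := by
    rw [Category.assoc, hpb.w, ← Category.assoc, ← hα, ← Spec.map_comp]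
    rfl
  obtain ⟨φ, hφ⟩ := exists_specMap_comp_eq hj h_over (by
    rintro _ ⟨z, rfl⟩
    rwa [Scheme.Hom.comp_apply, hξ])
  exact ⟨Ω, inferInstance, inferInstance, ξ, ⟨α.hom, fun _ => rfl⟩, φ, hα.symm, hφ.symm, hξ⟩

theorem exists_not_isNilpotent_basicOpen_subset {R : Type u} [CommRing R]
    {c : Spec (CommRingCat.of R) ⟶ X} {V : Set X} (hV : IsOpen V)
    (h : (V ∩ Set.range c).Nonempty) :
    ∃ f : R, ¬ IsNilpotent f ∧ ∀ z ∈ PrimeSpectrum.basicOpen f, c z ∈ V := by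
  obtain ⟨_, hv, v, rfl⟩ := h
  obtain ⟨_, ⟨f, rfl⟩, hvf, hfV⟩ :=
    PrimeSpectrum.isTopologicalBasis_basic_opens.exists_subset_of_mem_open
      (show v ∈ c ⁻¹' V from hv) (hV.preimage c.continuous)
  exact ⟨f, fun hf => hvf (nilpotent_iff_mem_prime.mp hf _ v.2), hfV⟩

theorem dense_orbit_of_goodDenseOrbits [IsAlgClosed k] [LocallyOfFiniteType q] (hσ : σ.hom ≫ q = q)
    {ℓ : Type u} [Field ℓ] [Algebra k ℓ] {π : X ⟶ Y} {s : X ⟶ Spec (CommRingCat.of ℓ)}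
    (hpb : IsPullback π s q (Spec.map (CommRingCat.ofHom (algebraMap k ℓ)))) {τ : X ≅ X}
    (hτπ : τ.hom ≫ π = π ≫ σ.hom) (hτs : τ.hom ≫ s = s) (hD : GoodDenseOrbits σ) {w : X}
    (hw : Dense (orbit σ (π w))) : Dense (orbit τ w) := by
  rw [dense_orbit_iff]
  rintro V hV ⟨v, hv⟩
  obtain ⟨B, _, _, j, _, _, hj, hwj, hjD⟩ := exists_affine_chart q hD hw
  obtain ⟨A, _, _, j', _, _, hj', hvj', -⟩ := exists_affine_chart q isOpen_univ (Set.mem_univ (π v))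
  obtain ⟨f, hf, hfV⟩ := exists_not_isNilpotent_basicOpen_subset (c := baseChangeMap hpb hj') hV
    ⟨v, hv, (range_baseChangeMap hpb hj').ge hvj'⟩
  obtain ⟨Ω, _, _, ξ, α, φ, hα, hφ, hξ⟩ := exists_fromSpec_field_lift hpb hj hwj
  have map_injective : Function.Injective (Algebra.TensorProduct.map α (AlgHom.id k A)) :=
    Module.Flat.rTensor_preserves_injective_linearMap α.toLinearMap α.toRingHom.injective
  obtain ⟨O, _, _, _, ι, t, φ', F, rfl, hF, hF_nil⟩ :=
    exists_localRing_not_isNilpotent_specialize φ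
      ((IsNilpotent.map_iff map_injective).not.mpr hf)
  have h_over : (specMap φ' ≫ j) ≫ q = Spec.map (CommRingCat.ofHom (algebraMap k O)) := by
    rw [Category.assoc, hj, specMap_comp_algebraMap]
  obtain ⟨n, ψ, hψ, hψF⟩ := exists_isUnit_productMap_of_dense_orbit hσ t h_over
    (hjD ⟨specMap φ' (IsLocalRing.closedPoint O), rfl⟩) hj' hF_nil
  have h_lift : ξ ≫ (isoZPow τ n).hom =
      specMap (Algebra.TensorProduct.productMap α (ι.comp ψ)) ≫ baseChangeMap hpb hj' := by
    apply eq_specMap_productMap_comp_baseChangeMap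
    · rw [Category.assoc, isoZPow_hom_comp_of_hom_comp_eq hτs, hα]
    · rw [Category.assoc, isoZPow_hom_comp hτπ, reassoc_of% hφ, specMap_comp, specMap_comp,
        Category.assoc, Category.assoc, hψ, Category.assoc]
  have h_ne_zero : Algebra.TensorProduct.productMap α (ι.comp ψ) f ≠ 0 :=
    (productMap_comp_apply_of_map_eq hF ψ) ▸ (hψF.map ι).ne_zero
  let z : Spec (CommRingCat.of Ω) := IsLocalRing.closedPoint Ω
  refine ⟨n, ?_⟩
  rw [← hξ z, ← Scheme.Hom.comp_apply, h_lift, Scheme.Hom.comp_apply]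
  exact hfV _ (specMap_apply_mem_basicOpen_iff.mpr h_ne_zero)

end DenseOrbits

theorem statement7_general (k : Type u) [Field k] [IsAlgClosed k]
    (ℓ : Type u) [Field ℓ] [Algebra k ℓ]
    (Y : Scheme.{u}) (q : Y ⟶ Spec (CommRingCat.of k)) [LocallyOfFiniteType q]
    (σ : Y ≅ Y) (hσ : σ.hom ≫ q = q)
    (X : Scheme.{u}) (π : X ⟶ Y) (s : X ⟶ Spec (CommRingCat.of ℓ))
    (hpb : IsPullback π s q (Spec.map (CommRingCat.ofHom (algebraMap k ℓ))))
    (σX : X ≅ X) (hσX₁ : σX.hom ≫ π = π ≫ σ.hom) (hσX₂ : σX.hom ≫ s = s) :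
    GoodDenseOrbits σX ↔ GoodDenseOrbits σ := by
  have : Surjective π := ⟨fun y => (exists_fiber_generic_point hpb y).imp fun _ h => h.1⟩
  have hπ : IsOpenMap π := isOpenMap_fst_of_isPullback hpb
  constructor <;> intro hD
  · have image_eq : π '' {x | Dense (orbit σX x)} = {y | Dense (orbit σ y)} := by
      refine Set.Subset.antisymm (Set.image_subset_iff.mpr fun x => dense_orbit_apply hσX₁) ?_
      intro y hy
      obtain ⟨x, rfl, hx⟩ := exists_fiber_generic_point hpb y
      exact ⟨x, dense_orbit_of_forall_specializes hπ hσX₁ hx hy, rfl⟩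
    rw [GoodDenseOrbits, ← image_eq]
    exact hπ _ hD
  · have preimage_eq : π ⁻¹' {y | Dense (orbit σ y)} = {x | Dense (orbit σX x)} :=
      Set.Subset.antisymm (fun _ => dense_orbit_of_goodDenseOrbits hσ hpb hσX₁ hσX₂ hD)
        fun _ => dense_orbit_apply hσX₁
    rw [GoodDenseOrbits, ← preimage_eq]
    exact IsOpen.preimage π.continuous hD

/-- Lemma 5.6 of the paper. Let `k ⊆ ℓ` be algebraically closed uncountable
fields, `Y` an integral scheme of finite type over `k` with `k`-automorphism `σ`, and let
`X = Y ×_{Spec k} Spec ℓ` with induced automorphism `σX = σ ×_k id_ℓ`. Then `(X, σX)` has good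
dense orbits if and only if `(Y, σ)` has good dense orbits. -/
theorem statement7 (k : Type u) [Field k] [IsAlgClosed k] [Uncountable k]
    (ℓ : Type u) [Field ℓ] [IsAlgClosed ℓ] [Uncountable ℓ] [Algebra k ℓ]
    (Y : Scheme.{u}) (q : Y ⟶ Spec (CommRingCat.of k))
    [IsIntegral Y] [LocallyOfFiniteType q] [QuasiCompact q]
    (σ : Y ≅ Y) (hσ : σ.hom ≫ q = q)
    (X : Scheme.{u}) (π : X ⟶ Y) (s : X ⟶ Spec (CommRingCat.of ℓ))
    (hpb : IsPullback π s q (Spec.map (CommRingCat.ofHom (algebraMap k ℓ))))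
    (σX : X ≅ X) (hσX₁ : σX.hom ≫ π = π ≫ σ.hom) (hσX₂ : σX.hom ≫ s = s) :
    GoodDenseOrbits σX ↔ GoodDenseOrbits σ :=
  statement7_general k ℓ Y q σ hσ X π s hpb σX hσX₁ hσX₂

end ThcrDM
end
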